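/- Let (Σ, I, →, ≼) be a strongly compatible WSTS with ≼ antisymmetric, let P ⊆ Σ be downward-closed, let U_0 := Σ \ P, U_{i+1} := U_i ∪ Pre(U_i), and let D_0 := min(Σ \ P), D_{i+1} := (⋃_{a ∈ D_i} min(Pre(↑{a}))) \ U_i. If U_L = U_{L+1} for some L, then D_i = ∅ for all i > L, and consequently the set ⋃_{i ≥ 0} D_i is finite. -/

import Mathlib

/-- Upward closure of a set w.r.t. a quasi-order. -/
def UpClosure {σ : Type*} (le : σ → σ → Prop) (X : Set σ) : Set σ := {y | ∃ x ∈ X, le x y}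

/-- Downward closure of a set w.r.t. a quasi-order. -/
def DownClosure {σ : Type*} (le : σ → σ → Prop) (X : Set σ) : Set σ := {y | ∃ x ∈ X, le y x}

/-- Successors of a set under a transition relation. -/
def PostSet {σ : Type*} (tr : σ → σ → Prop) (X : Set σ) : Set σ := {y | ∃ x ∈ X, tr x y}

/-- Predecessors of a set under a transition relation. -/
def PreSet {σ : Type*} (tr : σ → σ → Prop) (X : Set σ) : Set σ := {y | ∃ x ∈ X, tr y x}

/-- `le` is a well-quasi-order: reflexive, transitive, and every infinite sequence
has indices `i < j` with `f i ≤ f j`. -/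
def IsWqo {σ : Type*} (le : σ → σ → Prop) : Prop :=
  Reflexive le ∧ Transitive le ∧ ∀ f : ℕ → σ, ∃ i j : ℕ, i < j ∧ le (f i) (f j)

/-- WSTS compatibility: a larger state can simulate a transition in several steps. -/
def Compat {σ : Type*} (tr le : σ → σ → Prop) : Prop :=
  ∀ s₁ s₂ t₁, tr s₁ s₂ → le s₁ t₁ → ∃ t₂, Relation.ReflTransGen tr t₁ t₂ ∧ le s₂ t₂

/-- Strong compatibility: a larger state can simulate a transition in one step. -/
def StrongCompat {σ : Type*} (tr le : σ → σ → Prop) : Prop :=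
  ∀ s₁ s₂ t₁, tr s₁ s₂ → le s₁ t₁ → ∃ t₂, tr t₁ t₂ ∧ le s₂ t₂

/-- `StepN tr k x y` means there is a path of length exactly `k` from `x` to `y`. -/
def StepN {σ : Type*} (tr : σ → σ → Prop) : ℕ → σ → σ → Prop
  | 0 => Eq
  | n+1 => fun x z => ∃ y, tr x y ∧ StepN tr n y z

/-- The set of `le`-minimal elements of `Y`. -/
def MinSet {σ : Type*} (le : σ → σ → Prop) (Y : Set σ) : Set σ :=
  {y ∈ Y | ∀ z ∈ Y, le z y → le y z}

/-!
Let `Pre*(X)` be the set of states from which `X` is reachable, written below as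
`PreSet (Relation.ReflTransGen tr) X`. By compatibility `Pre*(U 0)` is upward-closed, and it is
closed under `Pre`, so it contains every `D i`. When `U L = U (L + 1)`, the chain `U` is constantly
`Pre*(U 0)` from `L` on; as `D (i + 1)` avoids `U i`, it is empty for `L ≤ i`. Each `D i` is finite
because minimal elements form an antichain, and antichains of a wqo are finite.
-/

section Compatibility

variable {σ : Type*} {tr le : σ → σ → Prop} {X P : Set σ}

theorem StrongCompat.compat (h : StrongCompat tr le) : Compat tr le := fun s₁ s₂ t₁ hs hle =>
  let ⟨t₂, ht, hle'⟩ := h s₁ s₂ t₁ hs hle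
  ⟨t₂, .single ht, hle'⟩

theorem Compat.strongCompat_reflTransGen (h : Compat tr le) :
    StrongCompat (Relation.ReflTransGen tr) le := by
  intro s₁ s₂ t₁ hs hle
  induction hs with
  | refl => exact ⟨t₁, .refl, hle⟩
  | tail _ hstep ih =>
    obtain ⟨t, ht, hle_t⟩ := ih
    obtain ⟨t₂, ht₂, hle₂⟩ := h _ _ t hstep hle_t
    exact ⟨t₂, ht.trans ht₂, hle₂⟩

theorem StrongCompat.upClosure_preSet_subset (h : StrongCompat tr le)
    (hX : UpClosure le X ⊆ X) : UpClosure le (PreSet tr X) ⊆ PreSet tr X := by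
  rintro y ⟨x, ⟨z, hz, hxz⟩, hxy⟩
  obtain ⟨w, hyw, hzw⟩ := h x z y hxz hxy
  exact ⟨w, hX ⟨z, hz, hzw⟩, hyw⟩

theorem upClosure_compl_subset (hP : DownClosure le P ⊆ P) : UpClosure le Pᶜ ⊆ Pᶜ :=
  fun _ ⟨_, hx, hxy⟩ hy => hx (hP ⟨_, hy, hxy⟩)

end Compatibility

section BackwardReachability

variable {σ : Type*} {tr : σ → σ → Prop} {X S : Set σ}

theorem preSet_mono (h : X ⊆ S) : PreSet tr X ⊆ PreSet tr S :=
  fun _ ⟨y, hy, hxy⟩ => ⟨y, h hy, hxy⟩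

theorem subset_preSet_reflTransGen : X ⊆ PreSet (Relation.ReflTransGen tr) X :=
  fun x hx => ⟨x, hx, .refl⟩

theorem preSet_preSet_reflTransGen_subset :
    PreSet tr (PreSet (Relation.ReflTransGen tr) X) ⊆ PreSet (Relation.ReflTransGen tr) X :=
  fun _ ⟨_, ⟨z, hz, hyz⟩, hxy⟩ => ⟨z, hz, hyz.head hxy⟩

theorem preSet_reflTransGen_subset (hXS : X ⊆ S) (hS : PreSet tr S ⊆ S) :
    PreSet (Relation.ReflTransGen tr) X ⊆ S := by
  rintro x ⟨y, hy, hxy⟩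
  induction hxy using Relation.ReflTransGen.head_induction_on with
  | refl => exact hXS hy
  | head hstep _ ih => exact hS ⟨_, ih, hstep⟩

variable {U : ℕ → Set σ}

theorem chain_subset_preSet_reflTransGen
    (hU : ∀ i, U (i + 1) = U i ∪ PreSet tr (U i)) (i : ℕ) :
    U i ⊆ PreSet (Relation.ReflTransGen tr) (U 0) := by
  induction i with
  | zero => exact subset_preSet_reflTransGen
  | succ i ih =>
    rw [hU]
    exact Set.union_subset ih ((preSet_mono ih).trans preSet_preSet_reflTransGen_subset)

theorem chain_eq_preSet_reflTransGen (hU : ∀ i, U (i + 1) = U i ∪ PreSet tr (U i))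
    {L i : ℕ} (hL : U L = U (L + 1)) (hi : L ≤ i) :
    U i = PreSet (Relation.ReflTransGen tr) (U 0) := by
  have hmono : Monotone U := monotone_nat_of_le_succ fun n => hU n ▸ Set.subset_union_left
  have hclosed : PreSet tr (U L) ⊆ U L := Set.union_eq_left.1 ((hU L).symm.trans hL.symm)
  exact (chain_subset_preSet_reflTransGen hU i).antisymm
    ((preSet_reflTransGen_subset (hmono L.zero_le) hclosed).trans (hmono hi))

end BackwardReachability

section Layers

variable {σ : Type*} {le tr : σ → σ → Prop} {D : ℕ → Set σ}

theorem minSet_subset (Y : Set σ) : MinSet le Y ⊆ Y :=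
  fun _ hy => hy.1

theorem isAntichain_minSet [Std.Antisymm le] (Y : Set σ) : IsAntichain le (MinSet le Y) :=
  fun x hx _ hy hne hxy => hne (antisymm hxy (hy.2 x hx.1 hxy))

theorem finite_minSet (hwqo : WellQuasiOrdered le) [Std.Antisymm le] (Y : Set σ) :
    (MinSet le Y).Finite :=
  (isAntichain_minSet Y).finite_of_wellQuasiOrdered hwqo

theorem finite_of_succ_subset_biUnion {G : σ → Set σ} (h0 : (D 0).Finite)
    (hG : ∀ a, (G a).Finite) (hD : ∀ i, D (i + 1) ⊆ ⋃ a ∈ D i, G a) (i : ℕ) :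
    (D i).Finite := by
  induction i with
  | zero => exact h0
  | succ i ih => exact (ih.biUnion fun a _ => hG a).subset (hD i)

theorem subset_of_succ_subset_biUnion_preSet {S : Set σ} (hup : UpClosure le S ⊆ S)
    (hpre : PreSet tr S ⊆ S) (h0 : D 0 ⊆ S)
    (hD : ∀ i, D (i + 1) ⊆ ⋃ a ∈ D i, PreSet tr (UpClosure le {a})) (i : ℕ) : D i ⊆ S := by
  induction i with
  | zero => exact h0
  | succ i ih =>
    refine (hD i).trans (Set.iUnion₂_subset fun a ha => (preSet_mono ?_).trans hpre)
    rintro b ⟨_, rfl, hab⟩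
    exact hup ⟨_, ih ha, hab⟩

end Layers

theorem stmt9_general {σ : Type*} {le tr : σ → σ → Prop} [Std.Antisymm le]
    (hwqo : WellQuasiOrdered le) (hcompat : Compat tr le)
    {P : Set σ} (hP : DownClosure le P ⊆ P) {U D : ℕ → Set σ}
    (hU0 : U 0 = Pᶜ) (hUs : ∀ i, U (i + 1) = U i ∪ PreSet tr (U i))
    (hD0 : D 0 = MinSet le Pᶜ)
    (hDs : ∀ i, D (i + 1) = (⋃ a ∈ D i, MinSet le (PreSet tr (UpClosure le {a}))) \ U i)
    {L : ℕ} (hL : U L = U (L + 1)) :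
    (∀ i, L < i → D i = ∅) ∧ (⋃ i, D i).Finite := by
  have hD_succ (i) : D (i + 1) ⊆ ⋃ a ∈ D i, MinSet le (PreSet tr (UpClosure le {a})) :=
    hDs i ▸ Set.sdiff_subset
  have hup : UpClosure le (U 0) ⊆ U 0 := hU0 ▸ upClosure_compl_subset hP
  have hD_reach : ∀ i, D i ⊆ PreSet (Relation.ReflTransGen tr) (U 0) :=
    subset_of_succ_subset_biUnion_preSet
      (hcompat.strongCompat_reflTransGen.upClosure_preSet_subset hup)
      preSet_preSet_reflTransGen_subset
      (by rw [hD0, hU0]; exact (minSet_subset _).trans subset_preSet_reflTransGen)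
      fun i => (hD_succ i).trans (Set.iUnion₂_mono fun _ _ => minSet_subset _)
  have hempty : ∀ i, L < i → D i = ∅
    | i + 1, hi => by
      have hdisj : Disjoint (D (i + 1)) (U i) := hDs i ▸ Set.disjoint_sdiff_left
      rw [chain_eq_preSet_reflTransGen hUs hL (Nat.le_of_lt_succ hi)] at hdisj
      exact hdisj.eq_bot_of_le (hD_reach (i + 1))
  have hfin : ∀ i, (D i).Finite :=
    finite_of_succ_subset_biUnion (hD0 ▸ finite_minSet hwqo _) (fun _ => finite_minSet hwqo _)
      hD_succ
  exact ⟨hempty,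
    (Set.finite_Iic L).iUnion (fun i _ => hfin i) fun i hi => hempty i (not_le.1 hi)⟩

/-- Once backward reachability stabilizes at level `L`, the sets `D i` are empty for `i > L`,
and the union of all `D i` is finite. -/
theorem stmt9 {σ : Type*} (le tr : σ → σ → Prop) (I : Set σ)
    (hwqo : IsWqo le) (hanti : ∀ x y, le x y → le y x → x = y)
    (hIfin : I.Finite) (hcompat : StrongCompat tr le)
    (P : Set σ) (hP : P = DownClosure le P)
    (U D : ℕ → Set σ)
    (hU0 : U 0 = Pᶜ) (hUs : ∀ i, U (i+1) = U i ∪ PreSet tr (U i))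
    (hD0 : D 0 = MinSet le Pᶜ)
    (hDs : ∀ i, D (i+1) =
      (⋃ a ∈ D i, MinSet le (PreSet tr (UpClosure le {a}))) \ U i)
    (L : ℕ) (hL : U L = U (L+1)) :
    (∀ i, L < i → D i = ∅) ∧ (⋃ i, D i).Finite := by
  have : Std.Antisymm le := ⟨hanti⟩
  exact stmt9_general hwqo.2.2 hcompat.compat hP.ge hU0 hUs hD0 hDs hL
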